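/- Let I ⊆ k[x_1,…,x_n] be an ideal, and let C_1 and C_2 be two cones in the Gröbner fan of I, i.e. C_1 is a nonempty face of C_v(I) and C_2 a nonempty face of C_{v′}(I) for some v, v′ ∈ ℝ^n_{>0}. Then C_1 ∩ C_2 is a face of C_1. -/

import Mathlib

/-!
Fix `v > 0` and order monomials by `v`-degree, ties broken lexicographically; by Dickson's lemma
this is a well-order, so `I` has a finite reduced Gröbner basis `x^a - r a`, `a ∈ M`. Let `K` be
the cone of all real weights `u`, of any signs, for which the initial form of each `x^a - r a`
contains `x^a`. Division by the basis never raises the `u`-degree when `u ∈ K`. Hence no nonzero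
element of `in_u(I)` is supported on standard monomials, and the initial forms of the basis generate
`in_u(I)` (`IsReducedSystem.initialFormIdeal_eq_span`). It follows that, for `u ∈ K` and arbitrary
`u'`, the ideals `in_u(I)` and `in_u'(I)` agree exactly when `u' ∈ K` and the same defining
inequalities of `K` are tight at `u` and `u'` (`IsReducedSystem.initialFormIdeal_eq_iff`). So
`Cv I u` is the smallest face of the polyhedral cone `K` containing `u`, for every `u ∈ K`.

A nonempty face `C` of `Cv I v` is closed under addition and contains `Cv I w` for each `w ∈ C`
(`exists_of_mem_groebnerFan`). Since `Cv I w` depends only on `w` and `I`, this applies to both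
cones at once: `C₁ ∩ C₂` contains `Cv I w` for each of its points `w`. Choosing `w` in `C₁ ∩ C₂`
with the fewest tight inequalities, every `x ∈ C₁ ∩ C₂` has all of these tight as well, because
`w + x ∈ C₁ ∩ C₂`; thus `C₁ ∩ C₂ = Cv I w`, and minus the sum of the normals tight at `w` exposes it
as a face of `C₁`.
-/

open MvPolynomial

/-- A term order on the monomials of `k[x_1,…,x_n]`, identified with exponent
vectors in `ℕ^n`: a strict total order with `1` smallest and compatible with
multiplication of monomials. -/
structure TermOrder (n : ℕ) : Type where
  lt : (Fin n →₀ ℕ) → (Fin n →₀ ℕ) → Prop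
  irrefl : ∀ a, ¬ lt a a
  trans : ∀ a b c, lt a b → lt b c → lt a c
  total : ∀ a b, a ≠ b → lt a b ∨ lt b a
  zero_lt : ∀ a, a ≠ 0 → lt 0 a
  add_right : ∀ a b c, lt a b → lt (a + c) (b + c)

variable {n : ℕ} {k : Type*} [Field k]

/-- The exponent of the `τ`-largest term of `f` (and `0` if `f = 0`). -/
noncomputable def TermOrder.leadExp (τ : TermOrder n) (f : MvPolynomial (Fin n) k) :
    Fin n →₀ ℕ :=
  letI := Classical.propDecidable (∃ α, α ∈ f.support ∧ ∀ β ∈ f.support, β ≠ α → τ.lt β α)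
  if h : ∃ α, α ∈ f.support ∧ ∀ β ∈ f.support, β ≠ α → τ.lt β α then h.choose else 0

/-- The initial term `in_τ(f)` : the `τ`-largest term of `f` (with coefficient). -/
noncomputable def TermOrder.initialTerm (τ : TermOrder n) (f : MvPolynomial (Fin n) k) :
    MvPolynomial (Fin n) k :=
  monomial (τ.leadExp f) (f.coeff (τ.leadExp f))

/-- The initial ideal `in_τ(I) = ⟨in_τ(f) : f ∈ I \ {0}⟩`. -/
noncomputable def TermOrder.initialIdeal (τ : TermOrder n) (I : Ideal (MvPolynomial (Fin n) k)) :
    Ideal (MvPolynomial (Fin n) k) :=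
  Ideal.span {p | ∃ f ∈ I, f ≠ 0 ∧ p = τ.initialTerm f}

/-- The `ω`-degree `⟨ω,α⟩` of a monomial exponent `α`. -/
noncomputable def wdeg (ω : Fin n → ℝ) (α : Fin n →₀ ℕ) : ℝ := ∑ i, ω i * (α i : ℝ)

/-- The initial form `in_ω(f)`: the sum of the terms of `f` whose exponents
maximize `⟨ω,·⟩`. -/
noncomputable def initialForm (ω : Fin n → ℝ) (f : MvPolynomial (Fin n) k) :
    MvPolynomial (Fin n) k :=
  letI : DecidablePred fun α : Fin n →₀ ℕ => ∀ β ∈ f.support, wdeg ω β ≤ wdeg ω α :=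
    Classical.decPred _
  ∑ α ∈ f.support.filter (fun α => ∀ β ∈ f.support, wdeg ω β ≤ wdeg ω α),
    monomial α (f.coeff α)

/-- The initial ideal `in_ω(I) = ⟨in_ω(f) : f ∈ I⟩`. -/
noncomputable def initialFormIdeal (ω : Fin n → ℝ) (I : Ideal (MvPolynomial (Fin n) k)) :
    Ideal (MvPolynomial (Fin n) k) :=
  Ideal.span {p | ∃ f ∈ I, p = initialForm ω f}

/-- `C_≺(I)`: the closure of `{u : in_u(I) = in_≺(I)}` in `ℝ^n`. -/
noncomputable def Cprec (τ : TermOrder n) (I : Ideal (MvPolynomial (Fin n) k)) :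
    Set (Fin n → ℝ) :=
  closure {u : Fin n → ℝ | initialFormIdeal u I = τ.initialIdeal I}

/-- `C_v(I)`: the closure of the equivalence class `{u : in_u(I) = in_v(I)}`. -/
noncomputable def Cv (I : Ideal (MvPolynomial (Fin n) k)) (v : Fin n → ℝ) :
    Set (Fin n → ℝ) :=
  closure {u : Fin n → ℝ | initialFormIdeal u I = initialFormIdeal v I}

/-- `F` is a face of `C`: either empty or the set of maximizers over `C` of a
linear functional. -/
def IsFaceOf (C F : Set (Fin n → ℝ)) : Prop :=
  F = ∅ ∨ ∃ w : Fin n → ℝ, F = {x ∈ C | ∀ y ∈ C, ∑ i, w i * y i ≤ ∑ i, w i * x i}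

/-- The Gröbner fan of `I`: all nonempty faces of the cones `C_v(I)`, `v ∈ ℝ^n_{>0}`. -/
noncomputable def GroebnerFan (I : Ideal (MvPolynomial (Fin n) k)) :
    Set (Set (Fin n → ℝ)) :=
  {F | F.Nonempty ∧ ∃ v : Fin n → ℝ, (∀ i, 0 < v i) ∧ IsFaceOf (Cv I v) F}

/-- `G` is a (finite) Gröbner basis of `I` w.r.t. `τ`. -/
def IsGroebnerBasis (τ : TermOrder n) (I : Ideal (MvPolynomial (Fin n) k))
    (G : Set (MvPolynomial (Fin n) k)) : Prop :=
  G.Finite ∧ Ideal.span G = I ∧ τ.initialIdeal I = Ideal.span (τ.initialTerm '' G)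

/-- `G` is the reduced Gröbner basis of `I` w.r.t. `τ`. -/
def IsReducedGroebnerBasis (τ : TermOrder n) (I : Ideal (MvPolynomial (Fin n) k))
    (G : Set (MvPolynomial (Fin n) k)) : Prop :=
  IsGroebnerBasis τ I G ∧
  (∀ g ∈ G, g.coeff (τ.leadExp g) = 1) ∧
  (∀ g ∈ G, ∀ α ∈ g.support, α ≠ τ.leadExp g →
    (monomial α 1 : MvPolynomial (Fin n) k) ∉ τ.initialIdeal I) ∧
  (∀ g ∈ G, Ideal.span (τ.initialTerm '' (G \ {g})) ≠ τ.initialIdeal I)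


/-! ### Initial forms -/

lemma wdeg_add (u : Fin n → ℝ) (a b : Fin n →₀ ℕ) : wdeg u (a + b) = wdeg u a + wdeg u b := by
  simp [wdeg, mul_add, Finset.sum_add_distrib]

lemma coeff_initialForm (u : Fin n → ℝ) (f : MvPolynomial (Fin n) k) (b : Fin n →₀ ℕ)
    [Decidable (∀ β ∈ f.support, wdeg u β ≤ wdeg u b)] :
    (initialForm u f).coeff b =
      if ∀ β ∈ f.support, wdeg u β ≤ wdeg u b then f.coeff b else 0 := by
  classical
  rw [initialForm, coeff_sum]
  simp only [coeff_monomial, Finset.sum_ite_eq', Finset.mem_filter, mem_support_iff]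
  by_cases hb : f.coeff b = 0
  · simp [hb]
  · simp [hb]

lemma coeff_initialForm_of_max {u : Fin n → ℝ} {f : MvPolynomial (Fin n) k} {a : Fin n →₀ ℕ}
    (ha : a ∈ f.support) (hmax : ∀ β ∈ f.support, wdeg u β ≤ wdeg u a) (b : Fin n →₀ ℕ) :
    (initialForm u f).coeff b = if wdeg u b = wdeg u a then f.coeff b else 0 := by
  classical
  rw [coeff_initialForm]
  by_cases hb : b ∈ f.support
  · refine if_congr ⟨fun h => le_antisymm (hmax b hb) (h a ha), fun h => h ▸ hmax⟩ rfl rfl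
  · simp [notMem_support_iff.1 hb]

lemma initialForm_ne_zero (u : Fin n → ℝ) {f : MvPolynomial (Fin n) k} (hf : f ≠ 0) :
    initialForm u f ≠ 0 := by
  classical
  obtain ⟨a, ha, hmax⟩ := f.support.exists_max_image (wdeg u) (support_nonempty.2 hf)
  intro h
  have := coeff_initialForm_of_max ha hmax a
  rw [h, if_pos rfl, coeff_zero] at this
  exact mem_support_iff.1 ha this.symm

/-- Every homogeneous component of an element of `in_u(I)` is the top-degree part of an element
of `I`, or zero. No sign condition on `u` is needed. -/
lemma exists_lift_of_mem_initialFormIdeal {u : Fin n → ℝ} {I : Ideal (MvPolynomial (Fin n) k)}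
    {h : MvPolynomial (Fin n) k} (hh : h ∈ initialFormIdeal u I) (t : ℝ) :
    ∃ f ∈ I, (∀ b ∈ f.support, wdeg u b ≤ t) ∧ ∀ b, wdeg u b = t → f.coeff b = h.coeff b := by
  classical
  have hadd : ∀ (h₁ h₂ : MvPolynomial (Fin n) k) (t : ℝ),
      (∃ f ∈ I, (∀ b ∈ f.support, wdeg u b ≤ t) ∧ ∀ b, wdeg u b = t → f.coeff b = h₁.coeff b) →
      (∃ f ∈ I, (∀ b ∈ f.support, wdeg u b ≤ t) ∧ ∀ b, wdeg u b = t → f.coeff b = h₂.coeff b) →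
      ∃ f ∈ I, (∀ b ∈ f.support, wdeg u b ≤ t) ∧
        ∀ b, wdeg u b = t → f.coeff b = (h₁ + h₂).coeff b := by
    rintro h₁ h₂ t ⟨f, hf, hf1, hf2⟩ ⟨g, hg, hg1, hg2⟩
    refine ⟨f + g, I.add_mem hf hg, fun b hb => ?_, fun b hb => by
      rw [coeff_add, coeff_add, hf2 b hb, hg2 b hb]⟩
    rcases Finset.mem_union.1 (support_add hb) with hb | hb
    exacts [hf1 b hb, hg1 b hb]
  induction hh using Submodule.span_induction generalizing t with
  | mem h hh =>
    obtain ⟨f, hf, rfl⟩ := hh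
    by_cases hf0 : f = 0
    · exact ⟨0, I.zero_mem, by simp, fun b _ => by simp [hf0, initialForm]⟩
    obtain ⟨a, ha, hmax⟩ := f.support.exists_max_image (wdeg u) (support_nonempty.2 hf0)
    by_cases hat : wdeg u a = t
    · refine ⟨f, hf, fun b hb => hat ▸ hmax b hb, fun b hb => ?_⟩
      rw [coeff_initialForm_of_max ha hmax, if_pos (hb.trans hat.symm)]
    · refine ⟨0, I.zero_mem, by simp, fun b hb => ?_⟩
      rw [coeff_initialForm_of_max ha hmax, if_neg fun h => hat (h.symm.trans hb), coeff_zero]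
  | zero => exact ⟨0, I.zero_mem, by simp, fun b _ => rfl⟩
  | add h₁ h₂ _ _ ih₁ ih₂ => exact hadd h₁ h₂ t (ih₁ t) (ih₂ t)
  | smul p h _ ih =>
    induction p using MvPolynomial.induction_on' with
    | monomial a c =>
      obtain ⟨f, hf, hf1, hf2⟩ := ih (t - wdeg u a)
      refine ⟨monomial a c * f, I.mul_mem_left _ hf, fun b hb => ?_, fun b hb => ?_⟩
      · rw [mem_support_iff, coeff_monomial_mul'] at hb
        split_ifs at hb with hab
        · have h1 := hf1 _ (mem_support_iff.2 (right_ne_zero_of_mul hb))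
          have h2 := wdeg_add u a (b - a)
          rw [add_tsub_cancel_of_le hab] at h2
          linarith
        · exact absurd rfl hb
      · rw [smul_eq_mul, coeff_monomial_mul', coeff_monomial_mul']
        split_ifs with hab
        · have h2 := wdeg_add u a (b - a)
          rw [add_tsub_cancel_of_le hab] at h2
          rw [hf2 _ (by linarith)]
        · rfl
    | add p q hp hq =>
      rw [add_smul]
      exact hadd _ _ t hp hq

/-! ### The monomial order attached to a positive weight -/

/-- Exponents are compared by `v`-degree first and lexicographically next: `a` precedes `b`
when `ordKey v a < ordKey v b`. -/
noncomputable def ordKey (v : Fin n → ℝ) (a : Fin n →₀ ℕ) : ℝ ×ₗ Lex (Fin n →₀ ℕ) :=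
  toLex (wdeg v a, toLex a)

lemma ordKey_lt_iff {v : Fin n → ℝ} {a b : Fin n →₀ ℕ} :
    ordKey v a < ordKey v b ↔
      wdeg v a < wdeg v b ∨ wdeg v a = wdeg v b ∧ toLex a < toLex b := by
  simp [ordKey, Prod.Lex.lt_iff]

lemma ordKey_injective (v : Fin n → ℝ) : Function.Injective (ordKey v) := fun a b h => by
  simpa [ordKey] using (Prod.ext_iff.1 (toLex.injective h)).2

lemma wdeg_le_of_ordKey_lt {v : Fin n → ℝ} {a b : Fin n →₀ ℕ} (h : ordKey v a < ordKey v b) :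
    wdeg v a ≤ wdeg v b := by
  rcases ordKey_lt_iff.1 h with h | h
  exacts [h.le, h.1.le]

lemma ordKey_add_lt {v : Fin n → ℝ} {a b : Fin n →₀ ℕ} (c : Fin n →₀ ℕ)
    (h : ordKey v a < ordKey v b) : ordKey v (c + a) < ordKey v (c + b) := by
  rw [ordKey_lt_iff] at *
  rw [wdeg_add, wdeg_add]
  rcases h with h | ⟨h, hlex⟩
  · left; linarith
  · right
    refine ⟨by rw [h], ?_⟩
    rw [toLex_add, toLex_add]
    exact add_lt_add_right hlex _

/-- For positive `v` the order is a well-order, by Dickson's lemma. -/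
lemma ordKey_wf {v : Fin n → ℝ} (hv : ∀ i, 0 < v i) :
    WellFounded fun a b : Fin n →₀ ℕ => ordKey v a < ordKey v b := by
  have hmono : Monotone (ordKey v) := fun a b hab => by
    have h1 : wdeg v a ≤ wdeg v b := Finset.sum_le_sum fun i _ =>
      mul_le_mul_of_nonneg_left (by exact_mod_cast hab i) (hv i).le
    rw [ordKey, ordKey, Prod.Lex.le_iff]
    rcases h1.lt_or_eq with h | h
    · exact Or.inl h
    · exact Or.inr ⟨h, Finsupp.toLex_monotone hab⟩
  have hpwo : (Set.range (ordKey v)).IsPWO := by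
    rw [← Set.image_univ]
    exact (Set.isPWO_of_wellQuasiOrderedLE _).image_of_monotone hmono
  have := hpwo.isWF
  rw [Set.IsWF, Set.wellFoundedOn_range] at this
  exact this

/-- Multivariate division in abstract form: if every monomial with exponent in `T \ S` is
congruent modulo `J` to a combination of smaller monomials with exponents in `T`, then any
polynomial supported on `T` is congruent to one supported on `S ∩ T`. -/
lemma exists_reduction {v : Fin n → ℝ} (hv : ∀ i, 0 < v i) (J : Ideal (MvPolynomial (Fin n) k))
    (S T : Set (Fin n →₀ ℕ))
    (h : ∀ a ∈ T, a ∉ S → ∃ q : MvPolynomial (Fin n) k, monomial a 1 - q ∈ J ∧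
      ∀ b ∈ q.support, b ∈ T ∧ ordKey v b < ordKey v a)
    (p : MvPolynomial (Fin n) k) (hp : ∀ b ∈ p.support, b ∈ T) :
    ∃ r, p - r ∈ J ∧ ∀ b ∈ r.support, b ∈ S ∧ b ∈ T := by
  classical
  set V : Submodule k (MvPolynomial (Fin n) k) :=
    J.restrictScalars k ⊔ restrictSupport k (S ∩ T) with hV
  have hmem : ∀ q : MvPolynomial (Fin n) k,
      (∀ b ∈ q.support, (monomial b 1 : MvPolynomial (Fin n) k) ∈ V) → q ∈ V := by
    intro q hq
    rw [q.as_sum]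
    refine V.sum_mem fun b hb => ?_
    have := V.smul_mem (q.coeff b) (hq b hb)
    rwa [smul_monomial, smul_eq_mul, mul_one] at this
  have hmon : ∀ a, a ∈ T → (monomial a 1 : MvPolynomial (Fin n) k) ∈ V := by
    intro a
    induction a using (ordKey_wf hv).induction with
    | _ a ih =>
      intro ha
      by_cases haS : a ∈ S
      · refine Submodule.mem_sup_right ((monomial_mem_restrictSupport k).2 (Or.inl ⟨haS, ha⟩))
      · obtain ⟨q, hq, hq'⟩ := h a ha haS
        rw [← sub_add_cancel (monomial a 1) q]
        exact V.add_mem (Submodule.mem_sup_left hq)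
          (hmem q fun b hb => ih b (hq' b hb).2 (hq' b hb).1)
  obtain ⟨j, hj, r, hr, hjr⟩ := Submodule.mem_sup.1 (hmem p fun b hb => hmon b (hp b hb))
  refine ⟨r, ?_, fun b hb => (mem_restrictSupport_iff k).1 hr hb⟩
  rw [← hjr, add_sub_cancel_right]
  exact hj

/-! ### Gröbner bases with standard tails -/

/-- The exponents of the leading monomials of the nonzero elements of `I`. -/
def leadSet (v : Fin n → ℝ) (I : Ideal (MvPolynomial (Fin n) k)) : Set (Fin n →₀ ℕ) :=
  {a | ∃ f ∈ I, f.coeff a = 1 ∧ ∀ b ∈ f.support, b ≠ a → ordKey v b < ordKey v a}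

lemma eq_zero_of_support_standard {v : Fin n → ℝ} {I : Ideal (MvPolynomial (Fin n) k)}
    {f : MvPolynomial (Fin n) k} (hf : f ∈ I) (hS : ∀ b ∈ f.support, b ∉ leadSet v I) :
    f = 0 := by
  by_contra h0
  obtain ⟨a, ha, hmax⟩ := f.support.exists_max_image (ordKey v) (support_nonempty.2 h0)
  have hc := mem_support_iff.1 ha
  refine hS a ha ⟨C (f.coeff a)⁻¹ * f, I.mul_mem_left _ hf, ?_, fun b hb hba => ?_⟩
  · rw [coeff_C_mul, inv_mul_cancel₀ hc]
  · rw [mem_support_iff, coeff_C_mul] at hb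
    exact (hmax b (mem_support_iff.2 (right_ne_zero_of_mul hb))).lt_of_ne
      fun h => hba (ordKey_injective v h)

/-- The weight `v` is positive and the polynomials `x^a - r a`, for `a ∈ M`, form a Gröbner basis
of `I` with standard tails `r a`: every leading monomial of `I` is divisible by some `x^a` with
`a ∈ M`. Minimality of `M` is not required. -/
structure IsReducedSystem (v : Fin n → ℝ) (I : Ideal (MvPolynomial (Fin n) k))
    (M : Finset (Fin n →₀ ℕ)) (r : (Fin n →₀ ℕ) → MvPolynomial (Fin n) k) : Prop where
  pos : ∀ i, 0 < v i
  lead : ∀ a ∈ M, a ∈ leadSet v I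
  exists_le : ∀ a ∈ leadSet v I, ∃ a₀ ∈ M, a₀ ≤ a
  mem : ∀ a ∈ M, monomial a 1 - r a ∈ I
  standard : ∀ a ∈ M, ∀ b ∈ (r a).support, b ∉ leadSet v I
  lt : ∀ a ∈ M, ∀ b ∈ (r a).support, ordKey v b < ordKey v a

lemma exists_isReducedSystem {v : Fin n → ℝ} (hv : ∀ i, 0 < v i)
    (I : Ideal (MvPolynomial (Fin n) k)) : ∃ M r, IsReducedSystem v I M r := by
  classical
  have hlow : ∀ f : MvPolynomial (Fin n) k, ∀ a, f.coeff a = 1 →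
      (∀ b ∈ f.support, b ≠ a → ordKey v b < ordKey v a) →
      ∀ b ∈ (monomial a 1 - f).support, ordKey v b < ordKey v a := by
    intro f a hfa hlt b hb
    rw [mem_support_iff, coeff_sub, coeff_monomial] at hb
    split_ifs at hb with hab
    · subst hab; simp [hfa] at hb
    · exact hlt b (mem_support_iff.2 fun h => hb (by simp [h])) (Ne.symm hab)
  have hr : ∀ a ∈ leadSet v I, ∃ r : MvPolynomial (Fin n) k, monomial a 1 - r ∈ I ∧
      ∀ b ∈ r.support, b ∉ leadSet v I ∧ ordKey v b < ordKey v a := by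
    rintro a ⟨f, hf, hfa, hlt⟩
    obtain ⟨r, hr, hr'⟩ := exists_reduction hv I (leadSet v I)ᶜ
      {b | ordKey v b < ordKey v a} (by
        intro c hc hcS
        obtain ⟨g, hg, hgc, hglt⟩ := not_not.1 hcS
        refine ⟨monomial c 1 - g, by simpa using hg, fun b hb => ?_⟩
        have := hlow g c hgc hglt b hb
        exact ⟨this.trans hc, this⟩) (monomial a 1 - f) (hlow f a hfa hlt)
    refine ⟨r, ?_, hr'⟩
    have := I.add_mem hr hf
    rwa [show monomial a 1 - f - r + f = monomial a 1 - r by ring] at this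
  choose! r hr using hr
  have hfin : {a | Minimal (· ∈ leadSet v I) a}.Finite :=
    WellQuasiOrderedLE.finite_of_isAntichain (setOfPred_minimal_antichain _)
  refine ⟨hfin.toFinset, r, hv, ?_, ?_, ?_, ?_, ?_⟩
  · intro a ha
    exact (hfin.mem_toFinset.1 ha).1
  · intro a ha
    obtain ⟨m, hm, hm'⟩ := (Set.isPWO_of_wellQuasiOrderedLE (leadSet v I)).exists_le_minimal ha
    exact ⟨m, hfin.mem_toFinset.2 hm', hm⟩
  · exact fun a ha => (hr a (hfin.mem_toFinset.1 ha).1).1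
  · exact fun a ha b hb => ((hr a (hfin.mem_toFinset.1 ha).1).2 b hb).1
  · exact fun a ha b hb => ((hr a (hfin.mem_toFinset.1 ha).1).2 b hb).2

/-- The weights whose initial forms select the leading monomial of each `x^a - r a`. -/
def InCone (M : Finset (Fin n →₀ ℕ)) (r : (Fin n →₀ ℕ) → MvPolynomial (Fin n) k)
    (u : Fin n → ℝ) : Prop :=
  ∀ a ∈ M, ∀ b ∈ (r a).support, wdeg u b ≤ wdeg u a

namespace IsReducedSystem

variable {v : Fin n → ℝ} {I : Ideal (MvPolynomial (Fin n) k)} {M : Finset (Fin n →₀ ℕ)}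
  {r : (Fin n →₀ ℕ) → MvPolynomial (Fin n) k}

lemma coeff_lead (h : IsReducedSystem v I M r) {a : Fin n →₀ ℕ} (ha : a ∈ M) :
    (monomial a 1 - r a).coeff a = 1 := by
  have : (r a).coeff a = 0 := notMem_support_iff.1 fun h' => h.standard a ha a h' (h.lead a ha)
  simp [this]

lemma coeff_tail {a b : Fin n →₀ ℕ} (hab : b ≠ a) :
    (monomial a 1 - r a).coeff b = -(r a).coeff b := by
  classical
  simp [coeff_monomial, hab.symm]

lemma lead_mem_support (h : IsReducedSystem v I M r) {a : Fin n →₀ ℕ} (ha : a ∈ M) :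
    a ∈ (monomial a 1 - r a).support := by
  rw [mem_support_iff, h.coeff_lead ha]; exact one_ne_zero

lemma mem_tail {a b : Fin n →₀ ℕ} (hb : b ∈ (monomial a 1 - r a).support) (hab : b ≠ a) :
    b ∈ (r a).support := by
  rw [mem_support_iff, coeff_tail hab, neg_ne_zero] at hb
  exact mem_support_iff.2 hb

lemma coeff_initialForm (h : IsReducedSystem v I M r) {u : Fin n → ℝ} (hu : InCone M r u)
    {a : Fin n →₀ ℕ} (ha : a ∈ M) (b : Fin n →₀ ℕ) :
    (initialForm u (monomial a 1 - r a)).coeff b =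
      if wdeg u b = wdeg u a then (monomial a 1 - r a).coeff b else 0 := by
  refine coeff_initialForm_of_max (h.lead_mem_support ha) (fun b hb => ?_) b
  by_cases hab : b = a
  · rw [hab]
  · exact hu a ha b (mem_tail hb hab)

/-- For `u` in the cone, the standard monomials of `I` stay linearly independent modulo
`in_u(I)`. A component of an element of `in_u(I)` supported on standard monomials is the top part
of some `f ∈ I`; dividing the lower part of `f` never raises the `u`-degree, so the normal form
of `f`, which is `0`, still has that top part. -/
lemma eq_zero_of_mem_initialFormIdeal (h : IsReducedSystem v I M r) {u : Fin n → ℝ}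
    (hu : InCone M r u) {p : MvPolynomial (Fin n) k} (hp : p ∈ initialFormIdeal u I)
    (hS : ∀ b ∈ p.support, b ∉ leadSet v I) : p = 0 := by
  classical
  by_contra h0
  obtain ⟨b₀, hb₀⟩ := support_nonempty.2 h0
  obtain ⟨f, hf, hf1, hf2⟩ := exists_lift_of_mem_initialFormIdeal hp (wdeg u b₀)
  set ftop : MvPolynomial (Fin n) k :=
    ∑ b ∈ f.support.filter (fun b => wdeg u b = wdeg u b₀), monomial b (f.coeff b) with hftop
  have htop : ∀ b, ftop.coeff b = if wdeg u b = wdeg u b₀ then p.coeff b else 0 := by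
    intro b
    rw [hftop, coeff_sum]
    simp only [coeff_monomial, Finset.sum_ite_eq', Finset.mem_filter, mem_support_iff]
    by_cases hb : wdeg u b = wdeg u b₀
    · rw [if_pos hb, ← hf2 b hb]
      by_cases hfb : f.coeff b = 0 <;> simp [hfb, hb]
    · simp [hb]
  obtain ⟨s, hs, hs'⟩ := exists_reduction h.pos I (leadSet v I)ᶜ {b | wdeg u b < wdeg u b₀} (by
      intro a ha haS
      obtain ⟨a₀, ha₀, hle⟩ := h.exists_le a (not_not.1 haS)
      obtain ⟨c, rfl⟩ := exists_add_of_le hle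
      refine ⟨monomial c 1 * r a₀, ?_, fun b hb => ?_⟩
      · have := I.mul_mem_left (monomial c 1) (h.mem a₀ ha₀)
        rwa [mul_sub, monomial_mul, one_mul, add_comm c a₀] at this
      · rw [mem_support_iff, coeff_monomial_mul'] at hb
        split_ifs at hb with hcb
        · obtain ⟨b, rfl⟩ := exists_add_of_le hcb
          rw [add_tsub_cancel_left, one_mul] at hb
          have h1 := hu a₀ ha₀ b (mem_support_iff.2 hb)
          have h2 := ordKey_add_lt c (h.lt a₀ ha₀ b (mem_support_iff.2 hb))
          rw [Set.mem_ofPred_eq, wdeg_add] at ha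
          refine ⟨?_, by rwa [add_comm a₀ c]⟩
          rw [Set.mem_ofPred_eq, wdeg_add]
          linarith
        · exact absurd rfl hb) (f - ftop) (by
      intro b hb
      rw [mem_support_iff, coeff_sub, htop] at hb
      split_ifs at hb with hbt
      · rw [hf2 b hbt, sub_self] at hb; exact absurd rfl hb
      · rw [sub_zero] at hb
        exact (hf1 b (mem_support_iff.2 hb)).lt_of_ne hbt)
  have hzero : ftop + s = 0 := by
    refine eq_zero_of_support_standard (v := v) (I := I) ?_ fun b hb => ?_
    · have := I.sub_mem hf hs
      rwa [show f - (f - ftop - s) = ftop + s by ring] at this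
    · rcases Finset.mem_union.1 (support_add hb) with hb | hb
      · rw [mem_support_iff, htop] at hb
        split_ifs at hb
        · exact hS b (mem_support_iff.2 hb)
        · exact absurd rfl hb
      · exact (hs' b hb).1
  have hsb : s.coeff b₀ = 0 := notMem_support_iff.1 fun hb => by simpa using (hs' b₀ hb).2
  have := congrArg (coeff b₀) hzero
  rw [coeff_add, htop, if_pos rfl, hsb, add_zero, coeff_zero] at this
  exact mem_support_iff.1 hb₀ this

/-- For `u` in the cone, the initial forms of the reduced Gröbner basis generate `in_u(I)`. -/
lemma initialFormIdeal_eq_span (h : IsReducedSystem v I M r) {u : Fin n → ℝ}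
    (hu : InCone M r u) :
    initialFormIdeal u I = Ideal.span {p | ∃ a ∈ M, p = initialForm u (monomial a 1 - r a)} := by
  classical
  set J := Ideal.span {p | ∃ a ∈ M, p = initialForm u (monomial a 1 - r a)} with hJ
  have hle : J ≤ initialFormIdeal u I := by
    refine Ideal.span_le.2 ?_
    rintro _ ⟨a, ha, rfl⟩
    exact Ideal.subset_span ⟨_, h.mem a ha, rfl⟩
  refine le_antisymm (fun p hp => ?_) hle
  obtain ⟨s, hs, hs'⟩ := exists_reduction h.pos J (leadSet v I)ᶜ Set.univ (by
      intro a _ haS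
      obtain ⟨a₀, ha₀, hle⟩ := h.exists_le a (not_not.1 haS)
      obtain ⟨c, rfl⟩ := exists_add_of_le hle
      refine ⟨monomial (a₀ + c) 1 - monomial c 1 * initialForm u (monomial a₀ 1 - r a₀), ?_,
        fun b hb => ⟨trivial, ?_⟩⟩
      · rw [sub_sub_cancel]
        exact J.mul_mem_left _ (Ideal.subset_span ⟨a₀, ha₀, rfl⟩)
      · rw [mem_support_iff, coeff_sub, coeff_monomial_mul', coeff_monomial] at hb
        have hcb : c ≤ b := by
          by_contra hcb
          rw [if_neg hcb, if_neg, sub_zero] at hb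
          · exact hb rfl
          · rintro rfl; exact hcb le_add_self
        obtain ⟨b, rfl⟩ := exists_add_of_le hcb
        rw [if_pos hcb, add_tsub_cancel_left, one_mul, h.coeff_initialForm hu ha₀] at hb
        rw [add_comm a₀ c] at hb ⊢
        by_cases hba : b = a₀
        · subst hba
          rw [if_pos rfl, if_pos rfl, h.coeff_lead ha₀, sub_self] at hb
          exact absurd rfl hb
        · rw [if_neg fun h => hba (add_left_cancel h).symm, zero_sub, neg_ne_zero] at hb
          split_ifs at hb
          · exact ordKey_add_lt c (h.lt a₀ ha₀ b (mem_tail (mem_support_iff.2 hb) hba))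
          · exact absurd rfl hb) p (fun _ _ => trivial)
  have hs0 : s = 0 := by
    refine h.eq_zero_of_mem_initialFormIdeal hu ?_ fun b hb => (hs' b hb).1
    have := Submodule.sub_mem _ hp (hle hs)
    rwa [sub_sub_cancel] at this
  rwa [hs0, sub_zero] at hs

/-- The equivalence class of a weight `u` in the cone is cut out by finitely many linear
conditions. The other weight `u'` is arbitrary. -/
lemma initialFormIdeal_eq_iff (h : IsReducedSystem v I M r) {u : Fin n → ℝ}
    (hu : InCone M r u) (u' : Fin n → ℝ) :
    initialFormIdeal u' I = initialFormIdeal u I ↔ InCone M r u' ∧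
      ∀ a ∈ M, ∀ b ∈ (r a).support, wdeg u' b = wdeg u' a ↔ wdeg u b = wdeg u a := by
  classical
  constructor
  · intro heq
    have hmem' : ∀ a ∈ M, initialForm u' (monomial a 1 - r a) ∈ initialFormIdeal u I :=
      fun a ha => heq ▸ Ideal.subset_span ⟨_, h.mem a ha, rfl⟩
    have hu' : InCone M r u' := by
      intro a ha b hb
      have hba : b ≠ a := fun hba => h.standard a ha b hb (hba ▸ h.lead a ha)
      have hb' : b ∈ (monomial a 1 - r a).support := by
        rw [mem_support_iff, coeff_tail hba, neg_ne_zero]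
        exact mem_support_iff.1 hb
      -- An initial form omitting `x^a` would be standard, hence zero.
      by_contra hlt
      have hca : (initialForm u' (monomial a 1 - r a)).coeff a = 0 := by
        rw [_root_.coeff_initialForm, if_neg fun h => hlt (h b hb')]
      refine initialForm_ne_zero u' (support_nonempty.1 ⟨a, h.lead_mem_support ha⟩)
        (h.eq_zero_of_mem_initialFormIdeal hu (hmem' a ha) fun c hc => ?_)
      have hca' : c ≠ a := by rintro rfl; exact mem_support_iff.1 hc hca
      rw [mem_support_iff, _root_.coeff_initialForm] at hc
      split_ifs at hc
      · exact h.standard a ha c (mem_tail (mem_support_iff.2 hc) hca')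
      · exact absurd rfl hc
    refine ⟨hu', fun a ha b hb => ?_⟩
    have hba : b ≠ a := fun hba => h.standard a ha b hb (hba ▸ h.lead a ha)
    have hdiff : initialForm u' (monomial a 1 - r a) - initialForm u (monomial a 1 - r a) = 0 := by
      refine h.eq_zero_of_mem_initialFormIdeal hu (Submodule.sub_mem _ (hmem' a ha)
        (Ideal.subset_span ⟨_, h.mem a ha, rfl⟩)) fun c hc => ?_
      rw [mem_support_iff, coeff_sub, h.coeff_initialForm hu ha,
        h.coeff_initialForm hu' ha] at hc
      by_cases hca : c = a
      · subst hca; simp at hc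
      · refine h.standard a ha c (mem_tail (mem_support_iff.2 fun h0 => hc ?_) hca)
        simp only [h0, ite_self, sub_zero]
    have := congrArg (coeff b) hdiff
    rw [coeff_sub, h.coeff_initialForm hu ha, h.coeff_initialForm hu' ha, coeff_tail hba,
      coeff_zero] at this
    have hb0 := mem_support_iff.1 hb
    by_cases h1 : wdeg u' b = wdeg u' a <;> by_cases h2 : wdeg u b = wdeg u a <;>
      simp_all
  · rintro ⟨hu', hiff⟩
    rw [h.initialFormIdeal_eq_span hu, h.initialFormIdeal_eq_span hu']
    have : ∀ a ∈ M, initialForm u' (monomial a 1 - r a) = initialForm u (monomial a 1 - r a) := by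
      intro a ha
      ext b
      rw [h.coeff_initialForm hu ha, h.coeff_initialForm hu' ha]
      by_cases hba : b = a
      · subst hba; simp
      by_cases hb : b ∈ (r a).support
      · simp only [hiff a ha b hb]
      · rw [coeff_tail hba, notMem_support_iff.1 hb]; simp
    congr 1
    ext p
    exact ⟨fun ⟨a, ha, hp⟩ => ⟨a, ha, hp.trans (this a ha)⟩,
      fun ⟨a, ha, hp⟩ => ⟨a, ha, hp.trans (this a ha).symm⟩⟩

end IsReducedSystem

/-! ### Polyhedral cones -/

/-- The polyhedral cone `{u : ⟨d,u⟩ ≥ 0 for all d ∈ D}`. -/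
def polyCone (D : Finset (Fin n → ℝ)) : Set (Fin n → ℝ) := {u | ∀ d ∈ D, 0 ≤ d ⬝ᵥ u}

/-- The smallest face of `polyCone D` containing `w`. -/
def minFace (D : Finset (Fin n → ℝ)) (w : Fin n → ℝ) : Set (Fin n → ℝ) :=
  {u | u ∈ polyCone D ∧ ∀ d ∈ D, d ⬝ᵥ w = 0 → d ⬝ᵥ u = 0}

/-- Inside `polyCone D`, the classes of the relation `in_u(I) = in_w(I)` are the relative
interiors of the faces. -/
def Describes (D : Finset (Fin n → ℝ)) (I : Ideal (MvPolynomial (Fin n) k)) : Prop :=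
  ∀ w ∈ polyCone D, ∀ u, initialFormIdeal u I = initialFormIdeal w I ↔
    u ∈ polyCone D ∧ ∀ d ∈ D, d ⬝ᵥ u = 0 ↔ d ⬝ᵥ w = 0

/-- Every positive weight lies in a polyhedral cone with this property: the cone of a
reduced Gröbner basis for an order refining the weight. -/
lemma exists_describes {v : Fin n → ℝ} (hv : ∀ i, 0 < v i)
    (I : Ideal (MvPolynomial (Fin n) k)) : ∃ D, Describes D I ∧ v ∈ polyCone D := by
  classical
  obtain ⟨M, r, h⟩ := exists_isReducedSystem hv I
  let e : (Fin n →₀ ℕ) → (Fin n →₀ ℕ) → Fin n → ℝ := fun a b i => (a i : ℝ) - b i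
  have he : ∀ a b u, e a b ⬝ᵥ u = wdeg u a - wdeg u b := by
    intro a b u
    simp only [dotProduct, wdeg, e, ← Finset.sum_sub_distrib]
    exact Finset.sum_congr rfl fun i _ => by ring
  have hall : ∀ P : (Fin n → ℝ) → Prop,
      (∀ d ∈ M.biUnion fun a => (r a).support.image (e a), P d) ↔
        ∀ a ∈ M, ∀ b ∈ (r a).support, P (e a b) := by
    intro P
    constructor
    · intro H a ha b hb
      exact H _ (Finset.mem_biUnion.2 ⟨a, ha, Finset.mem_image_of_mem _ hb⟩)
    · intro H d hd
      obtain ⟨a, ha, hd⟩ := Finset.mem_biUnion.1 hd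
      obtain ⟨b, hb, rfl⟩ := Finset.mem_image.1 hd
      exact H a ha b hb
  have hcone : ∀ u, u ∈ polyCone (M.biUnion fun a => (r a).support.image (e a)) ↔
      InCone M r u := by
    intro u
    rw [polyCone, Set.mem_ofPred_eq, hall fun d => 0 ≤ d ⬝ᵥ u]
    simp only [he, sub_nonneg, InCone]
  refine ⟨_, fun w hw u => ?_, (hcone v).2 fun a ha b hb => wdeg_le_of_ordKey_lt (h.lt a ha b hb)⟩
  rw [hcone] at hw ⊢
  rw [h.initialFormIdeal_eq_iff hw u, hall fun d => d ⬝ᵥ u = 0 ↔ d ⬝ᵥ w = 0]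
  simp only [he, sub_eq_zero, eq_comm]

lemma isClosed_polyCone (D : Finset (Fin n → ℝ)) : IsClosed (polyCone D) := by
  simp only [polyCone, Set.ofPred_forall]
  exact isClosed_biInter fun d _ => isClosed_le continuous_const (by fun_prop)

lemma isClosed_minFace (D : Finset (Fin n → ℝ)) (w : Fin n → ℝ) : IsClosed (minFace D w) := by
  have : IsClosed {u : Fin n → ℝ | ∀ d ∈ D, d ⬝ᵥ w = 0 → d ⬝ᵥ u = 0} := by
    simp only [Set.ofPred_forall]
    exact isClosed_biInter fun d _ => isClosed_iInter fun _ =>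
      isClosed_eq (by fun_prop) continuous_const
  exact (isClosed_polyCone D).inter this

lemma zero_mem_minFace (D : Finset (Fin n → ℝ)) (w : Fin n → ℝ) : 0 ∈ minFace D w :=
  ⟨fun d _ => by simp, fun d _ _ => by simp⟩

lemma minFace_add {D : Finset (Fin n → ℝ)} {w x y : Fin n → ℝ} (hx : x ∈ minFace D w)
    (hy : y ∈ minFace D w) : x + y ∈ minFace D w := by
  refine ⟨fun d hd => ?_, fun d hd h => ?_⟩
  · rw [dotProduct_add]; exact add_nonneg (hx.1 d hd) (hy.1 d hd)
  · rw [dotProduct_add, hx.2 d hd h, hy.2 d hd h, add_zero]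

lemma Describes.Cv_eq {D : Finset (Fin n → ℝ)} {I : Ideal (MvPolynomial (Fin n) k)}
    (h : Describes D I) {w : Fin n → ℝ} (hw : w ∈ polyCone D) : Cv I w = minFace D w := by
  apply Set.Subset.antisymm
  · refine closure_minimal (fun u hu => ?_) (isClosed_minFace D w)
    obtain ⟨h1, h2⟩ := (h w hw u).1 hu
    exact ⟨h1, fun d hd => (h2 d hd).2⟩
  · intro u hu
    -- `u` is the limit of `u + ε w`, which lies in the relative interior for `ε > 0`.
    have hlim : Filter.Tendsto (fun ε : ℝ => u + ε • w) (nhdsWithin 0 (Set.Ioi 0)) (nhds u) := by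
      have : Continuous fun ε : ℝ => u + ε • w := by fun_prop
      simpa using (this.tendsto 0).mono_left nhdsWithin_le_nhds
    refine mem_closure_of_tendsto hlim ?_
    filter_upwards [self_mem_nhdsWithin] with ε hε
    have hε' : 0 < ε := hε
    refine (h w hw _).2 ⟨fun d hd => ?_, fun d hd => ?_⟩
    · rw [dotProduct_add, dotProduct_smul, smul_eq_mul]
      exact add_nonneg (hu.1 d hd) (mul_nonneg hε'.le (hw d hd))
    · rw [dotProduct_add, dotProduct_smul, smul_eq_mul]
      constructor
      · intro h0
        have h1 := hu.1 d hd
        have h2 := hw d hd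
        have h3 : ε * d ⬝ᵥ w = 0 := by nlinarith [mul_nonneg hε'.le h2]
        exact (mul_eq_zero.1 h3).resolve_left hε'.ne'
      · intro h0
        rw [h0, hu.2 d hd h0, mul_zero, add_zero]

lemma exists_pos_sub_mem {D : Finset (Fin n → ℝ)} {w u : Fin n → ℝ} (hw : w ∈ polyCone D)
    (hu : u ∈ minFace D w) : ∃ ε : ℝ, 0 < ε ∧ w - ε • u ∈ polyCone D := by
  have hev : ∀ᶠ ε : ℝ in nhdsWithin 0 (Set.Ioi 0), ∀ d ∈ D, 0 ≤ d ⬝ᵥ (w - ε • u) := by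
    rw [Filter.eventually_all_finset]
    intro d hd
    rcases (hw d hd).eq_or_lt with h0 | h0
    · refine Filter.Eventually.of_forall fun ε => ?_
      rw [dotProduct_sub, dotProduct_smul, hu.2 d hd h0.symm, ← h0]; simp
    · have hc : Continuous fun ε : ℝ => d ⬝ᵥ (w - ε • u) := by fun_prop
      have := (hc.tendsto 0).mono_left (nhdsWithin_le_nhds (s := Set.Ioi 0))
      simp only [zero_smul, sub_zero] at this
      exact (this.eventually (lt_mem_nhds h0)).mono fun _ h => h.le
  obtain ⟨ε, h1, h2⟩ := (hev.and self_mem_nhdsWithin).exists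
  exact ⟨ε, h2, h1⟩

/-- The properties of a cone of the Gröbner fan that matter for intersections. The last clause
says that the cone contains `Cv I w`, which depends on `w` and `I` only, for each of its points
`w`. -/
lemma exists_of_mem_groebnerFan {I : Ideal (MvPolynomial (Fin n) k)} {F : Set (Fin n → ℝ)}
    (hF : F ∈ GroebnerFan I) : ∃ D, F ⊆ polyCone D ∧ (∀ x ∈ F, ∀ y ∈ F, x + y ∈ F) ∧
      ∀ w ∈ F, Cv I w = minFace D w ∧ Cv I w ⊆ F := by
  obtain ⟨hne, v, hv, hface⟩ := hF
  obtain ⟨D, hD, hvD⟩ := exists_describes hv I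
  rw [hD.Cv_eq hvD] at hface
  rcases hface with rfl | ⟨c, hc⟩
  · exact absurd hne Set.not_nonempty_empty
  have hc' : ∀ x, x ∈ F ↔ x ∈ minFace D v ∧ ∀ y ∈ minFace D v, c ⬝ᵥ y ≤ c ⬝ᵥ x := by
    intro x; rw [hc]; rfl
  have hFD : F ⊆ polyCone D := fun x hx => ((hc' x).1 hx).1.1
  -- The maximum of a linear functional attained on a cone is zero.
  have hmax : ∀ x ∈ F, c ⬝ᵥ x = 0 := by
    intro x hx
    obtain ⟨h1, h2⟩ := (hc' x).1 hx
    have h3 := h2 0 (zero_mem_minFace D v)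
    have h4 := h2 (x + x) (minFace_add h1 h1)
    rw [dotProduct_zero] at h3
    rw [dotProduct_add] at h4
    linarith
  obtain ⟨x₀, hx₀⟩ := hne
  have hF0 : ∀ x, x ∈ F ↔ x ∈ minFace D v ∧ c ⬝ᵥ x = 0 := fun x =>
    ⟨fun hx => ⟨((hc' x).1 hx).1, hmax x hx⟩, fun hx => (hc' x).2 ⟨hx.1, fun y hy => by
      rw [hx.2, ← hmax x₀ hx₀]; exact ((hc' x₀).1 hx₀).2 y hy⟩⟩
  refine ⟨D, hFD, fun x hx y hy => ?_, fun w hw => ⟨hD.Cv_eq (hFD hw), ?_⟩⟩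
  · rw [hF0] at *
    exact ⟨minFace_add hx.1 hy.1, by rw [dotProduct_add, hx.2, hy.2, add_zero]⟩
  · rw [hD.Cv_eq (hFD hw)]
    intro u hu
    obtain ⟨hwv, hw2⟩ := (hc' w).1 hw
    have huv : u ∈ minFace D v := ⟨hu.1, fun d hd h => hu.2 d hd (hwv.2 d hd h)⟩
    obtain ⟨ε, hε, hsub⟩ := exists_pos_sub_mem (hFD hw) hu
    have h1 := hw2 u huv
    have h2 := hw2 (w - ε • u) ⟨hsub, fun d hd h => by
      rw [dotProduct_sub, dotProduct_smul, hwv.2 d hd h, huv.2 d hd h]; simp⟩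
    rw [dotProduct_sub, dotProduct_smul, smul_eq_mul] at h2
    rw [hmax w hw] at h1 h2
    exact (hF0 u).2 ⟨huv, le_antisymm h1 (by nlinarith)⟩

/-- The intersection of two cones `C₁`, `C₂` in the Gröbner fan of `I` is a
face of `C₁`. -/
theorem inter_of_groebnerCones_isFace (I : Ideal (MvPolynomial (Fin n) k))
    (C₁ C₂ : Set (Fin n → ℝ)) (h₁ : C₁ ∈ GroebnerFan I) (h₂ : C₂ ∈ GroebnerFan I) :
    IsFaceOf C₁ (C₁ ∩ C₂) := by
  classical
  obtain ⟨D, hD, hadd₁, hmin₁⟩ := exists_of_mem_groebnerFan h₁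
  obtain ⟨D', -, hadd₂, hmin₂⟩ := exists_of_mem_groebnerFan h₂
  have hzero : ∀ {C : Set (Fin n → ℝ)} {E : Finset (Fin n → ℝ)}, C.Nonempty →
      (∀ w ∈ C, Cv I w = minFace E w ∧ Cv I w ⊆ C) → (0 : Fin n → ℝ) ∈ C := by
    rintro C E ⟨w, hw⟩ h
    exact (h w hw).2 ((h w hw).1 ▸ zero_mem_minFace E w)
  have hne : (C₁ ∩ C₂).Nonempty := ⟨0, hzero h₁.1 hmin₁, hzero h₂.1 hmin₂⟩
  -- `w` is a point of the intersection on which as few of the inequalities as possible are tight.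
  obtain ⟨w, hw, hwmin⟩ := (measure fun x : Fin n → ℝ =>
    (D.filter fun d => d ⬝ᵥ x = 0).card).wf.has_min _ hne
  set T := D.filter fun d => d ⬝ᵥ w = 0 with hT
  have hinter : C₁ ∩ C₂ = minFace D w := by
    apply Set.Subset.antisymm
    · rintro x ⟨hx₁, hx₂⟩
      have hxw : (D.filter fun d => d ⬝ᵥ (w + x) = 0) ⊆ T := by
        intro d hd
        rw [Finset.mem_filter, dotProduct_add] at hd
        have h1 := hD hw.1 d hd.1
        have h2 := hD hx₁ d hd.1
        exact Finset.mem_filter.2 ⟨hd.1, by linarith⟩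
      have heq := Finset.eq_of_subset_of_card_le hxw
        (not_lt.1 (hwmin (w + x) ⟨hadd₁ _ hw.1 _ hx₁, hadd₂ _ hw.2 _ hx₂⟩))
      refine ⟨hD hx₁, fun d hd h0 => ?_⟩
      have : d ∈ T := Finset.mem_filter.2 ⟨hd, h0⟩
      rw [← heq, Finset.mem_filter, dotProduct_add, h0, zero_add] at this
      exact this.2
    · rw [← (hmin₁ w hw.1).1]
      exact Set.subset_inter (hmin₁ w hw.1).2 (hmin₂ w hw.2).2
  -- The functional `-∑ d`, over the inequalities tight at `w`, exposes the smallest face.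
  refine Or.inr ⟨-∑ d ∈ T, d, ?_⟩
  have hval : ∀ x, ∑ i, (-∑ d ∈ T, d) i * x i = -∑ d ∈ T, d ⬝ᵥ x := by
    intro x
    change (-∑ d ∈ T, d) ⬝ᵥ x = _
    rw [neg_dotProduct, sum_dotProduct]
  simp only [hval]
  have hnn : ∀ x ∈ C₁, ∀ d ∈ T, 0 ≤ d ⬝ᵥ x := fun x hx d hd =>
    hD hx d (Finset.mem_filter.1 hd).1
  ext x
  constructor
  · intro hx
    refine ⟨hx.1, fun y hy => neg_le_neg ?_⟩
    rw [hinter] at hx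
    rw [Finset.sum_eq_zero fun d hd => hx.2 d (Finset.mem_filter.1 hd).1 (Finset.mem_filter.1 hd).2]
    exact Finset.sum_nonneg (hnn y hy)
  · rintro ⟨hx, hmax⟩
    have h0 := hmax 0 (hzero h₁.1 hmin₁)
    simp only [dotProduct_zero, Finset.sum_const_zero, neg_zero] at h0
    have h1 : ∑ d ∈ T, d ⬝ᵥ x = 0 :=
      le_antisymm (by linarith) (Finset.sum_nonneg (hnn x hx))
    rw [hinter]
    exact ⟨hD hx, fun d hd hdw =>
      (Finset.sum_eq_zero_iff_of_nonneg (hnn x hx)).1 h1 d (Finset.mem_filter.2 ⟨hd, hdw⟩)⟩
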